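/- Let X be a finite-dimensional polyhedral real Banach space. Then the following are equivalent: (a) the Birkhoff-James orthogonality is C-approximately symmetric in X, i.e., there exists ε ∈ [0,1) such that for all x, y ∈ X, x ⊥_B y implies y ⊥_B^ε x; (b) every y ∈ S_X is C-approximately left-symmetric, i.e., for each y ∈ S_X there exists ε_y ∈ [0,1) such that for all z ∈ X, y ⊥_B z implies z ⊥_B^{ε_y} y; (c) every x ∈ S_X has the local property (P); (d) every extreme point of the closed unit ball of X has the local property (P). -/

import Mathlib

/-!
The implications (a) ⇒ (b) and (c) ⇒ (d) are immediate (an extreme point of the ball of a nonzero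
space is a unit vector).

(b) ⇒ (c). If `y ⊥_B^ε x` for unit vectors, a compactness argument on the dual sphere
(`exists_suppJ_ge`) gives `f, g ∈ J(y)` with `f x ≥ -ε` and `g x ≤ ε`. If every functional in `J(y)`
took the value `±1` at `x`, then `f x = 1` and `g x = -1`, and the midpoint of `f` and `g` would be
an element of `J(y)` vanishing at `x`, a contradiction.

(d) ⇒ (a). The unit ball is the convex hull of its finite set `V` of extreme points. Writing a unit
vector `y` as a convex combination of `V`, the set `J(y)` depends only on the support of the
combination, so there are only finitely many sets `J(y)`
(`finite_suppJ`). Hence (d) yields one `ε < 1` such that `v ∈ V`, `v ⊥_B y` imply `|f v| ≤ ε` for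
some `f ∈ J(y)`. For a unit vector `x ⊥_B y`, some `v ∈ V` has weight at least `1 / |V|` in a convex
combination representing `x`; then `v ⊥_B y` as well, and the corresponding `f` satisfies
`|f x| ≤ 1 - (1 - ε) / |V|`, which is the approximate orthogonality `y ⊥_B^{ε'} x` with
`ε' = 1 - (1 - ε) / |V|`.
-/

open Set Metric

section Defs

variable {E : Type*} [NormedAddCommGroup E] [NormedSpace ℝ E]

/-- Birkhoff-James orthogonality: `x ⊥_B y` iff `‖x + t • y‖ ≥ ‖x‖` for all real `t`. -/
def BJOrth (x y : E) : Prop := ∀ t : ℝ, ‖x‖ ≤ ‖x + t • y‖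

/-- Dragomir-type approximate orthogonality: `x ⊥_D^ε y` iff
`‖x + t • y‖ ≥ √(1 - ε²) ‖x‖` for all real `t`. -/
def DOrth (ε : ℝ) (x y : E) : Prop :=
  ∀ t : ℝ, Real.sqrt (1 - ε ^ 2) * ‖x‖ ≤ ‖x + t • y‖

/-- Chmieliński-type approximate orthogonality: `x ⊥_B^ε y` iff
`‖x + t • y‖² ≥ ‖x‖² - 2 ε ‖x‖ ‖t • y‖` for all real `t`. -/
def BOrth (ε : ℝ) (x y : E) : Prop :=
  ∀ t : ℝ, ‖x‖ ^ 2 - 2 * ε * ‖x‖ * ‖t • y‖ ≤ ‖x + t • y‖ ^ 2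

/-- The set of supporting functionals at `x`. -/
def SuppJ (x : E) : Set (E →L[ℝ] ℝ) := {f | ‖f‖ = 1 ∧ f x = ‖x‖}

/-- The local property (P) at `x`: there is no unit vector `y` with `x ⊥_B y` such that
every supporting functional of `y` (or its negative) supports `x`. -/
def LocalP (x : E) : Prop :=
  ¬ ∃ y : E, ‖y‖ = 1 ∧ BJOrth x y ∧ ∀ f ∈ SuppJ y, f ∈ SuppJ x ∨ -f ∈ SuppJ x

end Defs

section Aux

variable {X : Type*} [NormedAddCommGroup X] [NormedSpace ℝ X]

lemma norm_eq_one_of_le {f : X →L[ℝ] ℝ} {y : X} (hy : ‖y‖ = 1) (hf : ‖f‖ ≤ 1) (hfy : f y = 1) :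
    ‖f‖ = 1 := by
  refine le_antisymm hf ?_
  have := f.le_opNorm y
  rw [hfy, hy] at this
  simpa using this

lemma abs_apply_le {f : X →L[ℝ] ℝ} (hf : ‖f‖ = 1) (x : X) : |f x| ≤ ‖x‖ := by
  have := f.le_opNorm x
  rwa [hf, one_mul, Real.norm_eq_abs] at this

/-- The easy half of the description of `⊥_B^ε` by supporting functionals. -/
lemma bOrth_of_functional {ε : ℝ} {x y : X} {f : X →L[ℝ] ℝ}
    (hf : ‖f‖ = 1) (hfy : f y = ‖y‖) (hfx : |f x| ≤ ε * ‖x‖) : BOrth ε y x := by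
  intro t
  have h1 : ‖y‖ - ε * ‖t • x‖ ≤ ‖y + t • x‖ := by
    have h2 := (abs_le.1 (abs_apply_le hf (y + t • x))).2
    have h3 : |t * f x| ≤ ε * ‖t • x‖ := by
      rw [abs_mul, norm_smul, Real.norm_eq_abs]
      nlinarith [abs_nonneg t]
    have h4 := (abs_le.1 h3).1
    simp only [map_add, map_smul, smul_eq_mul, hfy] at h2
    linarith
  by_cases h : 0 ≤ ‖y‖ - ε * ‖t • x‖
  · nlinarith [sq_nonneg (ε * ‖t • x‖)]
  · nlinarith [norm_nonneg y, sq_nonneg ‖y + t • x‖]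

/-- One-sided half of the converse: the functional is a limit of functionals supporting the points
`y + t • x` as `t` decreases to `0`. -/
lemma exists_suppJ_ge [FiniteDimensional ℝ X] {ε : ℝ} {x y : X} (hx : ‖x‖ = 1) (hy : ‖y‖ = 1)
    (h : BOrth ε y x) : ∃ f ∈ SuppJ y, -ε ≤ f x := by
  have : Nontrivial X := ⟨x, 0, fun h0 => by simp [h0] at hx⟩
  let t : ℕ → ℝ := fun n => 1 / ((n : ℝ) + 1)
  have htpos : ∀ n, 0 < t n := fun n => by positivity
  have ht : Filter.Tendsto t Filter.atTop (nhds 0) := tendsto_one_div_add_atTop_nhds_zero_nat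
  choose f hf hfe using fun n => exists_dual_vector' ℝ (y + t n • x)
  have : ProperSpace (X →L[ℝ] ℝ) := FiniteDimensional.proper ℝ _
  obtain ⟨g, hg, φ, hφ, hlim⟩ := (isCompact_sphere (0 : X →L[ℝ] ℝ) 1).tendsto_subseq
    (x := f) (fun n => by simp [hf n])
  have hg1 : ‖g‖ = 1 := by simpa using hg
  have htφ : Filter.Tendsto (fun n => t (φ n)) Filter.atTop (nhds 0) := ht.comp hφ.tendsto_atTop
  have happ : ∀ z : X, Filter.Tendsto (fun n => f (φ n) z) Filter.atTop (nhds (g z)) := fun z =>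
    ((ContinuousLinearMap.apply ℝ ℝ z).continuous.tendsto g).comp hlim
  have hnorm : Filter.Tendsto (fun n => ‖y + t (φ n) • x‖) Filter.atTop (nhds 1) := by
    have h1 : Filter.Tendsto (fun n => y + t (φ n) • x) Filter.atTop (nhds (y + (0 : ℝ) • x)) :=
      tendsto_const_nhds.add (htφ.smul_const x)
    have h2 := h1.norm
    simpa [hy] using h2
  have hsplit : ∀ n, f n y + t n * f n x = ‖y + t n • x‖ := fun n => by
    have := hfe n
    simpa using this
  refine ⟨g, ⟨hg1, ?_⟩, ?_⟩
  · have h1 : Filter.Tendsto (fun n => f (φ n) y + t (φ n) * f (φ n) x) Filter.atTop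
        (nhds (g y + 0 * g x)) := (happ y).add (htφ.mul (happ x))
    simp only [hsplit] at h1
    have := tendsto_nhds_unique h1 hnorm
    rw [hy]
    linarith
  · have h1 : Filter.Tendsto (fun n => f (φ n) x * (‖y + t (φ n) • x‖ + 1)) Filter.atTop
        (nhds (g x * (1 + 1))) := (happ x).mul (hnorm.add tendsto_const_nhds)
    have h2 : -(2 * ε) ≤ g x * (1 + 1) := by
      refine ge_of_tendsto' h1 fun n => ?_
      set m := φ n
      have hb := h (t m)
      rw [norm_smul, hx, hy, Real.norm_eq_abs, abs_of_pos (htpos m)] at hb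
      have hs := hsplit m
      have hfy : f m y ≤ 1 := hy ▸ (abs_le.1 (abs_apply_le (hf m) y)).2
      set u := ‖y + t m • x‖
      have hu : 0 ≤ u := norm_nonneg _
      -- with `u = ‖y + t x‖`: `t f(x) ≥ u - 1` and `(u - 1)(u + 1) ≥ -2 ε t`
      have h3 : 0 ≤ t m * (f m x * (u + 1) + 2 * ε) := by nlinarith
      have := nonneg_of_mul_nonneg_right h3 (htpos m)
      linarith
    linarith

lemma localP_of_bOrth [FiniteDimensional ℝ X] {x : X} (hx : ‖x‖ = 1)
    (h : ∃ ε ∈ Set.Ico (0 : ℝ) 1, ∀ z : X, BJOrth x z → BOrth ε z x) : LocalP x := by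
  rintro ⟨y, hy, hxy, hJ⟩
  obtain ⟨ε, ⟨-, hε1⟩, hε⟩ := h
  have hb := hε y hxy
  have hb' : BOrth ε y (-x) := fun t => by simpa using hb (-t)
  obtain ⟨f, hf, hfx⟩ := exists_suppJ_ge hx hy hb
  obtain ⟨g, hg, hgx⟩ := exists_suppJ_ge (by simpa using hx) hy hb'
  have hval : ∀ k ∈ SuppJ y, k x = 1 ∨ k x = -1 := fun k hk => by
    rcases hJ k hk with h1 | h1
    · exact Or.inl (h1.2.trans hx)
    · right
      have := h1.2
      rw [neg_apply, hx] at this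
      linarith
  have hf1 : f x = 1 := (hval f hf).resolve_right fun h0 => by linarith
  have hg1 : g x = -1 := (hval g hg).resolve_left fun h0 => by
    rw [map_neg] at hgx
    linarith
  have hky : ((1 / 2 : ℝ) • (f + g)) y = 1 := by
    have h1 := hf.2
    have h2 := hg.2
    rw [hy] at h1 h2
    simp [h1, h2]
    norm_num
  have hk : ((1 / 2 : ℝ) • (f + g)) ∈ SuppJ y := by
    refine ⟨norm_eq_one_of_le hy ?_ hky, hky.trans hy.symm⟩
    rw [norm_smul]
    have := norm_add_le f g
    rw [hf.1, hg.1] at this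
    norm_num
    linarith
  have hkx : ((1 / 2 : ℝ) • (f + g)) x = 0 := by simp [hf1, hg1]
  rcases hval _ hk with h0 | h0 <;> rw [hkx] at h0 <;> norm_num at h0

lemma exists_weights [FiniteDimensional ℝ X] {V : Finset X}
    (hV : (V : Set X) = Set.extremePoints ℝ (Metric.closedBall (0 : X) 1)) {x : X}
    (hx : ‖x‖ = 1) :
    ∃ w : X → ℝ, (∀ v ∈ V, 0 ≤ w v) ∧ ∑ v ∈ V, w v = 1 ∧ ∑ v ∈ V, w v • v = x := by
  have : ProperSpace X := FiniteDimensional.proper ℝ X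
  have hKM := closure_convexHull_extremePoints (isCompact_closedBall (0 : X) 1)
    (convex_closedBall (0 : X) 1)
  rw [← hV, (V.finite_toSet.isClosed_convexHull ℝ).closure_eq] at hKM
  have hmem : x ∈ convexHull ℝ (V : Set X) := by
    rw [hKM]
    simp [hx]
  exact Finset.mem_convexHull'.1 hmem

lemma norm_le_of_mem {V : Finset X}
    (hV : (V : Set X) = Set.extremePoints ℝ (Metric.closedBall (0 : X) 1)) {v : X}
    (hv : v ∈ V) : ‖v‖ ≤ 1 := by
  have h1 : v ∈ Set.extremePoints ℝ (Metric.closedBall (0 : X) 1) := hV ▸ hv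
  simpa using h1.1

lemma norm_of_extreme [Nontrivial X] {v : X}
    (hv : v ∈ Set.extremePoints ℝ (Metric.closedBall (0 : X) 1)) : ‖v‖ = 1 := by
  simpa using extremePoints_closedBall_subset_sphere hv

/-- There are only finitely many sets `J(y)`: the set `J(y)` is determined by the extreme points
occurring with positive weight in a convex combination representing `y`. -/
lemma finite_suppJ [FiniteDimensional ℝ X] {V : Finset X}
    (hV : (V : Set X) = Set.extremePoints ℝ (Metric.closedBall (0 : X) 1)) :
    {F : Set (X →L[ℝ] ℝ) | ∃ y : X, ‖y‖ = 1 ∧ SuppJ y = F}.Finite := by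
  classical
  refine ((V.powerset.finite_toSet).image
    fun S : Finset X => {f : X →L[ℝ] ℝ | ‖f‖ = 1 ∧ ∀ v ∈ S, f v = 1}).subset ?_
  rintro F ⟨y, hy, rfl⟩
  obtain ⟨w, hw0, hw1, hwy⟩ := exists_weights hV hy
  refine ⟨V.filter fun v => w v ≠ 0, Finset.mem_coe.2 (Finset.mem_powerset.2 (Finset.filter_subset _ _)), ?_⟩
  ext f
  simp only [Set.mem_ofPred_eq, SuppJ, Finset.mem_filter, and_imp, hy]
  refine and_congr_right fun hf => ?_
  have hfy : f y = ∑ v ∈ V, w v * f v := by simp [← hwy]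
  have hle : ∀ v ∈ V, w v * f v ≤ w v := fun v hv => by
    have h1 := (abs_le.1 ((abs_apply_le hf v).trans (norm_le_of_mem hV hv))).2
    nlinarith [hw0 v hv]
  have key : f y = 1 ↔ ∀ v ∈ V, w v * f v = w v := by
    rw [hfy, ← hw1]
    exact Finset.sum_eq_sum_iff_of_le hle
  rw [key]
  refine forall₂_congr fun v _ => ?_
  rw [mul_right_eq_self₀]
  tauto

/-- Orthogonality to `y` passes from a unit vector `x` to each unit vector of positive weight in a
convex combination representing `x`. -/
lemma bjOrth_of_weight {V : Finset X} (hVn : ∀ v ∈ V, ‖v‖ = 1) {x y : X} (hx : ‖x‖ = 1)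
    {w : X → ℝ} (hw0 : ∀ v ∈ V, 0 ≤ w v) (hw1 : ∑ v ∈ V, w v = 1) (hwx : ∑ v ∈ V, w v • v = x)
    {v : X} (hv : v ∈ V) (hpos : 0 < w v) (h : BJOrth x y) : BJOrth v y := by
  classical
  intro t
  rw [hVn v hv]
  have h1 := h (w v * t)
  rw [hx] at h1
  have hsplit : x = w v • v + ∑ u ∈ V.erase v, w u • u := by
    rw [Finset.add_sum_erase V (fun u => w u • u) hv, hwx]
  have h2 : ‖∑ u ∈ V.erase v, w u • u‖ ≤ 1 - w v := by
    rw [← hw1, ← Finset.add_sum_erase V w hv, add_sub_cancel_left]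
    refine norm_sum_le_of_le _ fun u hu => ?_
    have hu' := Finset.mem_of_mem_erase hu
    rw [norm_smul, hVn u hu', mul_one, Real.norm_eq_abs, abs_of_nonneg (hw0 u hu')]
  have h3 : x + (w v * t) • y = w v • (v + t • y) + ∑ u ∈ V.erase v, w u • u := by
    rw [hsplit, smul_add, smul_smul]
    abel
  rw [h3] at h1
  have h4 := norm_add_le (w v • (v + t • y)) (∑ u ∈ V.erase v, w u • u)
  rw [norm_smul, Real.norm_eq_abs, abs_of_pos hpos] at h4
  have h5 : w v * 1 ≤ w v * ‖v + t • y‖ := by linarith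
  exact le_of_mul_le_mul_left h5 hpos

/-- A uniform version of (P) at the extreme points; uniformity comes from the finiteness of the
family of sets `J(y)`. -/
lemma exists_uniform [FiniteDimensional ℝ X] {V : Finset X}
    (hV : (V : Set X) = Set.extremePoints ℝ (Metric.closedBall (0 : X) 1))
    (hVn : ∀ v ∈ V, ‖v‖ = 1) (hP : ∀ v ∈ V, LocalP v) :
    ∃ ε ∈ Set.Ico (0 : ℝ) 1, ∀ v ∈ V, ∀ y : X, ‖y‖ = 1 → BJOrth v y →
      ∃ f ∈ SuppJ y, |f v| ≤ ε := by
  have hex : ∀ p : X × Set (X →L[ℝ] ℝ), ∃ ε : Set.Ico (0 : ℝ) 1,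
      (∃ f ∈ p.2, |f p.1| < 1) → ∃ f ∈ p.2, |f p.1| ≤ ε := fun p => by
    by_cases h : ∃ f ∈ p.2, |f p.1| < 1
    · obtain ⟨f, hf, hlt⟩ := h
      exact ⟨⟨_, abs_nonneg _, hlt⟩, fun _ => ⟨f, hf, le_rfl⟩⟩
    · exact ⟨⟨0, by simp⟩, fun h' => absurd h' h⟩
  choose ε hε using hex
  have : Nonempty (Set.Ico (0 : ℝ) 1) := ⟨⟨0, by simp⟩⟩
  obtain ⟨M, hM⟩ := (((V.finite_toSet).prod (finite_suppJ hV)).image ε).bddAbove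
  refine ⟨M, M.2, fun v hv y hy hvy => ?_⟩
  have hlt : ∃ f ∈ SuppJ y, |f v| < 1 := by
    by_contra! hcon
    refine hP v hv ⟨y, hy, hvy, fun f hf => ?_⟩
    have h1 : |f v| = 1 := le_antisymm (hVn v hv ▸ abs_apply_le hf.1 v) (hcon f hf)
    rcases (abs_eq zero_le_one).1 h1 with h2 | h2
    · exact Or.inl ⟨hf.1, by rw [h2, hVn v hv]⟩
    · exact Or.inr ⟨by rw [norm_neg, hf.1], by simp [h2, hVn v hv]⟩
  obtain ⟨f, hf, hle⟩ := hε (v, SuppJ y) hlt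
  exact ⟨f, hf, hle.trans (hM ⟨(v, SuppJ y), ⟨hv, y, hy, rfl⟩, rfl⟩)⟩

lemma approx_symm_unit [FiniteDimensional ℝ X] {V : Finset X}
    (hV : (V : Set X) = Set.extremePoints ℝ (Metric.closedBall (0 : X) 1))
    (hVn : ∀ v ∈ V, ‖v‖ = 1) (hP : ∀ v ∈ V, LocalP v) :
    ∃ ε ∈ Set.Ico (0 : ℝ) 1, ∀ x y : X, ‖x‖ = 1 → ‖y‖ = 1 → BJOrth x y →
      ∃ f ∈ SuppJ y, |f x| ≤ ε := by
  classical
  obtain ⟨ε, ⟨hε0, hε1⟩, hε⟩ := exists_uniform hV hVn hP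
  rcases V.eq_empty_or_nonempty with rfl | hne
  · refine ⟨0, by simp, fun x y hx => ?_⟩
    obtain ⟨w, -, hw1, -⟩ := exists_weights hV hx
    simp at hw1
  have hN : (1 : ℝ) ≤ V.card := by exact_mod_cast hne.card_pos
  have hN0 : (0 : ℝ) < V.card := by linarith
  refine ⟨1 - (1 - ε) / V.card, ⟨?_, ?_⟩, fun x y hx hy hxy => ?_⟩
  · have : (1 - ε) / V.card ≤ 1 := by
      rw [div_le_one hN0]
      linarith
    linarith
  · have : 0 < (1 - ε) / V.card := div_pos (by linarith) hN0
    linarith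
  · obtain ⟨w, hw0, hw1, hwx⟩ := exists_weights hV hx
    obtain ⟨v, hv, hwv⟩ : ∃ v ∈ V, 1 / (V.card : ℝ) ≤ w v := by
      refine Finset.exists_le_of_sum_le hne ?_
      rw [hw1, Finset.sum_const, nsmul_eq_mul]
      exact (mul_one_div_cancel hN0.ne').le
    have hpos : 0 < w v := lt_of_lt_of_le (by positivity) hwv
    obtain ⟨f, hf, hfv⟩ := hε v hv y hy (bjOrth_of_weight hVn hx hw0 hw1 hwx hv hpos hxy)
    refine ⟨f, hf, ?_⟩
    have hfx : f x = w v * f v + ∑ u ∈ V.erase v, w u * f u := by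
      rw [Finset.add_sum_erase V (fun u => w u * f u) hv, ← hwx]
      simp
    have h2 : |∑ u ∈ V.erase v, w u * f u| ≤ 1 - w v := by
      rw [← hw1, ← Finset.add_sum_erase V w hv, add_sub_cancel_left]
      refine (Finset.abs_sum_le_sum_abs _ _).trans (Finset.sum_le_sum fun u hu => ?_)
      have hu' := Finset.mem_of_mem_erase hu
      rw [abs_mul, abs_of_nonneg (hw0 u hu')]
      exact mul_le_of_le_one_right (hw0 u hu') (hVn u hu' ▸ abs_apply_le hf.1 u)
    have h3 : |w v * f v| ≤ w v * ε := by
      rw [abs_mul, abs_of_pos hpos]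
      exact mul_le_mul_of_nonneg_left hfv hpos.le
    have h4 : (1 - ε) / V.card ≤ w v * (1 - ε) := by
      rw [div_eq_mul_one_div, mul_comm]
      exact mul_le_mul_of_nonneg_right hwv (by linarith)
    rw [hfx]
    have := abs_add_le (w v * f v) (∑ u ∈ V.erase v, w u * f u)
    linarith

lemma BJOrth.smul {x y : X} (h : BJOrth x y) {a : ℝ} (ha : a ≠ 0) (b : ℝ) :
    BJOrth (a • x) (b • y) := by
  intro t
  have h1 := h (a⁻¹ * (t * b))
  have h2 : a • x + t • b • y = a • (x + (a⁻¹ * (t * b)) • y) := by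
    rw [smul_add, smul_smul, smul_smul, mul_inv_cancel_left₀ ha]
  rw [h2, norm_smul, norm_smul]
  exact mul_le_mul_of_nonneg_left h1 (norm_nonneg _)

lemma approx_symm [FiniteDimensional ℝ X]
    (hpoly : (Set.extremePoints ℝ (Metric.closedBall (0 : X) 1)).Finite)
    (hP : ∀ x ∈ Set.extremePoints ℝ (Metric.closedBall (0 : X) 1), LocalP x) :
    ∃ ε ∈ Set.Ico (0 : ℝ) 1, ∀ x y : X, BJOrth x y → BOrth ε y x := by
  rcases subsingleton_or_nontrivial X with hX | hX
  · refine ⟨0, by simp, fun x y _ t => ?_⟩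
    simp [Subsingleton.elim x 0]
  obtain ⟨ε, hε, H⟩ := approx_symm_unit (V := hpoly.toFinset) (by simp)
    (fun v hv => norm_of_extreme (hpoly.mem_toFinset.1 hv))
    (fun v hv => hP v (hpoly.mem_toFinset.1 hv))
  refine ⟨ε, hε, fun x y hxy => ?_⟩
  rcases eq_or_ne x 0 with rfl | hx
  · intro t
    simp
  rcases eq_or_ne y 0 with rfl | hy
  · intro t
    simp only [norm_zero, zero_add]
    nlinarith [sq_nonneg ‖t • x‖]
  have hx' := norm_pos_iff.2 hx
  have hy' := norm_pos_iff.2 hy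
  obtain ⟨f, hf, hfx⟩ := H (‖x‖⁻¹ • x) (‖y‖⁻¹ • y) (norm_smul_inv_norm (𝕜 := ℝ) hx)
    (norm_smul_inv_norm (𝕜 := ℝ) hy) (hxy.smul (inv_ne_zero hx'.ne') _)
  refine bOrth_of_functional hf.1 ?_ ?_
  · have := hf.2
    rw [map_smul, norm_smul, norm_inv, norm_norm, smul_eq_mul] at this
    exact mul_left_cancel₀ (inv_ne_zero hy'.ne') this
  · rw [map_smul, smul_eq_mul, abs_mul, abs_of_pos (inv_pos.2 hx'), inv_mul_le_iff₀ hx'] at hfx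
    linarith

end Aux

theorem stmt_15 {X : Type*} [NormedAddCommGroup X] [NormedSpace ℝ X]
    [FiniteDimensional ℝ X]
    (hpoly : (Set.extremePoints ℝ (Metric.closedBall (0 : X) 1)).Finite) :
    List.TFAE
      [ ∃ ε ∈ Set.Ico (0 : ℝ) 1, ∀ x y : X, BJOrth x y → BOrth ε y x,
        ∀ y : X, ‖y‖ = 1 →
          ∃ ε ∈ Set.Ico (0 : ℝ) 1, ∀ z : X, BJOrth y z → BOrth ε z y,
        ∀ x : X, ‖x‖ = 1 → LocalP x,
        ∀ x ∈ Set.extremePoints ℝ (Metric.closedBall (0 : X) 1), LocalP x ] := by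
  tfae_have 1 → 2 := fun ⟨ε, hε, h⟩ y _ => ⟨ε, hε, fun z => h y z⟩
  tfae_have 2 → 3 := fun h x hx => localP_of_bOrth hx (h x hx)
  tfae_have 3 → 4 := fun h x hx => by
    rcases subsingleton_or_nontrivial X with hX | hX
    · -- the zero space has no unit vectors
      rintro ⟨y, hy, -⟩
      simp [Subsingleton.elim y 0] at hy
    · exact h x (norm_of_extreme hx)
  tfae_have 4 → 1 := approx_symm hpoly
  tfae_finish
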